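/- Let G be a graph of even order p and size e with χ(G) = χ_la(G). Suppose there exists a local antimagic labeling f of G with c(f) = χ(G). Let m ≠ n be integers with m, n ≥ 2, m ≡ n (mod 2) and (m,n) ≠ (2,2). If for every vertex u of G, f⁺(u) is not equal to (p−m)e + (p−m−n)(p(m+n)+1)/2 + np(m+n) + n(mn+1)/2 and not equal to (p−n)e + (p−m−n)(p(m+n)+1)/2 + mp(m+n) + m(mn+1)/2, then χ_la(G ∨ K_{m,n}) = χ_la(G) + 2. -/

import Mathlib

open Finset SimpleGraph
open scoped Classical

/-- The induced vertex label (weight) of `x`: the sum of `f` over all edges incident to `x`. -/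
noncomputable def vertexWeight {V : Type*} [Fintype V] (G : SimpleGraph V)
    (f : Sym2 V → ℕ) (x : V) : ℕ :=
  ∑ e ∈ G.edgeFinset.filter (fun e => x ∈ e), f e

/-- `f` is a local antimagic labeling of `G`: it restricts to a bijection from the edge set of
`G` onto `{1, …, q}` (where `q` is the number of edges), and adjacent vertices get distinct
induced vertex labels. -/
def IsLocalAntimagic {V : Type*} [Fintype V] (G : SimpleGraph V) (f : Sym2 V → ℕ) : Prop :=
  Set.BijOn f G.edgeSet (Set.Icc 1 G.edgeSet.ncard) ∧
  ∀ ⦃x y : V⦄, G.Adj x y → vertexWeight G f x ≠ vertexWeight G f y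

/-- The number of distinct induced vertex labels, `c(f)`. -/
noncomputable def colorCount {V : Type*} [Fintype V] (G : SimpleGraph V)
    (f : Sym2 V → ℕ) : ℕ :=
  (Finset.univ.image (vertexWeight G f)).card

/-- The local antimagic chromatic number `χ_la(G)`. -/
noncomputable def chiLA {V : Type*} [Fintype V] (G : SimpleGraph V) : ℕ :=
  sInf { n | ∃ f : Sym2 V → ℕ, IsLocalAntimagic G f ∧ colorCount G f = n }

/-- The join `G ∨ H` of two vertex-disjoint graphs. -/
def joinG {α β : Type*} (G : SimpleGraph α) (H : SimpleGraph β) : SimpleGraph (α ⊕ β) :=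
  SimpleGraph.fromRel (fun x y =>
    (∃ a b, x = Sum.inl a ∧ y = Sum.inl b ∧ G.Adj a b) ∨
    (∃ a b, x = Sum.inr a ∧ y = Sum.inr b ∧ H.Adj a b) ∨
    (∃ a b, x = Sum.inl a ∧ y = Sum.inr b))


/-! ### Magic rectangles -/

/-- A magic rectangle indexed by `α × β`, in centred form with doubled entries: the entries are
the integers `N-1, N-3, …, -(N-1)` with `N = |α||β|`, and all row and column sums vanish. -/
def Magic (α β : Type*) [Fintype α] [Fintype β] : Prop :=
  ∃ w : α → β → ℤ,
    (∀ a b a' b', w a b = w a' b' → a = a' ∧ b = b') ∧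
    (∀ a b, |w a b| < (Fintype.card α : ℤ) * Fintype.card β ∧
      (w a b + (Fintype.card α : ℤ) * Fintype.card β) % 2 = 1) ∧
    (∀ a, ∑ b, w a b = 0) ∧ (∀ b, ∑ a, w a b = 0)

theorem Magic.symm {α β : Type*} [Fintype α] [Fintype β] (h : Magic α β) : Magic β α := by
  obtain ⟨w, h1, h2, h3, h4⟩ := h
  refine ⟨fun b a => w a b, ?_, ?_, h4, h3⟩
  · intro b a b' a' h
    exact (h1 _ _ _ _ h).symm
  · intro b a
    rw [mul_comm]
    exact h2 a b

theorem Magic.congr {α β α' β' : Type*} [Fintype α] [Fintype β] [Fintype α'] [Fintype β']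
    (h : Magic α β) (ha : Fintype.card α' = Fintype.card α)
    (hb : Fintype.card β' = Fintype.card β) : Magic α' β' := by
  obtain ⟨w, h1, h2, h3, h4⟩ := h
  have ea : α' ≃ α := Fintype.equivOfCardEq ha
  have eb : β' ≃ β := Fintype.equivOfCardEq hb
  refine ⟨fun a b => w (ea a) (eb b), ?_, ?_, ?_, ?_⟩
  · intro a b a' b' h
    have := h1 _ _ _ _ h
    simpa using this
  · intro a b
    rw [ha, hb]
    exact h2 _ _
  · intro a
    rw [← h3 (ea a)]
    exact Equiv.sum_comp eb (fun b => w (ea a) b)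
  · intro b
    rw [← h4 (eb b)]
    exact Equiv.sum_comp ea (fun a => w a (eb b))

/-- Appending four columns to a rectangle with an even number of rows. -/
theorem Magic.add_four {β : Type*} [Fintype β] (c : ℕ)
    (h : Magic (Fin c × Fin 2) β) : Magic (Fin c × Fin 2) (β ⊕ Fin 4) := by
  obtain ⟨w, h1, h2, h3, h4⟩ := h
  set N : ℤ := (Fintype.card (Fin c × Fin 2) : ℤ) * Fintype.card β with hN
  have hNe : N = 2 * (c * Fintype.card β) := by
    rw [hN]; simp; ring
  have hN' : (Fintype.card (Fin c × Fin 2) : ℤ) * Fintype.card (β ⊕ Fin 4) = N + 8 * c := by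
    rw [hN]; simp; ring
  have hN0 : 0 ≤ N := by positivity
  set K : ℤ := c * Fintype.card β with hK
  refine ⟨fun a b => Sum.elim (fun b => w a b)
    (fun j : Fin 4 => (![1, -1] a.2 : ℤ) * ![1, -1, -1, 1] j * (N + 1 + 8 * (a.1 : ℕ) + 2 * (j : ℕ)))
      b, ?_, ?_, ?_, ?_⟩
  · rintro ⟨a, s⟩ (b | j) ⟨a', s'⟩ (b' | j') h
    · simpa using h1 _ _ _ _ h
    · exfalso
      have := abs_lt.1 (h2 (a, s) b).1
      simp only [Sum.elim_inl, Sum.elim_inr] at h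
      fin_cases s' <;> fin_cases j' <;> simp at h <;> omega
    · exfalso
      have := abs_lt.1 (h2 (a', s') b').1
      simp only [Sum.elim_inl, Sum.elim_inr] at h
      fin_cases s <;> fin_cases j <;> simp at h <;> omega
    · simp only [Sum.elim_inl, Sum.elim_inr] at h
      have : (a : ℕ) = a' ∧ s = s' ∧ j = j' := by
        fin_cases s <;> fin_cases j <;> fin_cases s' <;> fin_cases j' <;> simp at h ⊢ <;> omega
      obtain ⟨h1, h2, h3⟩ := this
      simp [Fin.ext h1, h2, h3]
  · rw [hN']
    rintro ⟨a, s⟩ (b | j)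
    · have := h2 (a, s) b
      have h5 := abs_lt.1 this.1
      simp only [Sum.elim_inl]
      rw [abs_lt]
      omega
    · simp only [Sum.elim_inr]
      have := a.2
      rw [abs_lt]
      fin_cases s <;> fin_cases j <;> simp <;> omega
  · rintro ⟨a, s⟩
    rw [Fintype.sum_sum_type]
    simp only [Sum.elim_inl, Sum.elim_inr, h3, Fin.sum_univ_four]
    fin_cases s <;> simp <;> ring
  · rintro (b | j)
    · simpa using h4 b
    · simp only [Sum.elim_inr]
      rw [Fintype.sum_prod_type]
      apply Finset.sum_eq_zero
      intro a _
      simp only [Fin.sum_univ_two]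
      simp

theorem magic_add_four {a b : ℕ} (ha : Even a) (h : Magic (Fin a) (Fin b)) :
    Magic (Fin a) (Fin (b + 4)) := by
  obtain ⟨c, rfl⟩ := ha
  have h1 : Magic (Fin c × Fin 2) (Fin b) := h.congr (by simp; ring) rfl
  exact (Magic.add_four c h1).congr (by simp; ring) (by simp)

theorem magic_add_four_mul {a b : ℕ} (ha : Even a) (h : Magic (Fin a) (Fin b)) (k : ℕ) :
    Magic (Fin a) (Fin (b + 4 * k)) := by
  induction k with
  | zero => simpa using h
  | succ k ih =>
    have := magic_add_four ha ih
    exact this.congr rfl (by simp; ring)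

theorem magic_zero (a : ℕ) : Magic (Fin a) (Fin 0) :=
  ⟨fun _ _ => 0, fun _ b => b.elim0, fun _ b => b.elim0, by simp, fun b => b.elim0⟩

theorem magic_two_six : Magic (Fin 2) (Fin 6) := by
  refine ⟨![![1, 3, 5, 9, -7, -11], ![-1, -3, -5, -9, 7, 11]], ?_, ?_, ?_, ?_⟩
  · decide
  · simp only [Fintype.card_fin]; decide
  · decide
  · decide

theorem magic_two_aux {b : ℕ} (hb : b % 4 = 2) (hb6 : 6 ≤ b) {a : ℕ} (ha : a % 4 = 2) :
    Magic (Fin a) (Fin b) := by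
  have h1 : Magic (Fin 2) (Fin b) := by
    have := magic_add_four_mul (by decide) magic_two_six ((b - 6) / 4)
    exact this.congr rfl (by simp; omega)
  have h2 := magic_add_four_mul (Nat.even_iff.2 (by omega)) h1.symm ((a - 2) / 4)
  exact h2.symm.congr (by simp; omega) rfl

theorem magic_even_aux {a b : ℕ} (ha : Even a) (hb : b % 4 = 0) : Magic (Fin a) (Fin b) := by
  have := magic_add_four_mul ha (magic_zero a) (b / 4)
  exact this.congr rfl (by simp; omega)

theorem magic_even {a b : ℕ} (ha : Even a) (hb : Even b) (hab : ¬ (a = 2 ∧ b = 2)) :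
    Magic (Fin a) (Fin b) := by
  have ha' := Nat.even_iff.1 ha
  have hb' := Nat.even_iff.1 hb
  by_cases h1 : b % 4 = 0
  · exact magic_even_aux ha h1
  by_cases h2 : a % 4 = 0
  · exact (magic_even_aux hb h2).symm
  by_cases h3 : 6 ≤ b
  · exact magic_two_aux (by omega) h3 (by omega)
  · exact (magic_two_aux (a := b) (b := a) (by omega) (by omega) (by omega)).symm

theorem magic_three_seven : Magic (Fin 3) (Fin 7) := by
  refine ⟨![![20, -20, -6, 16, -14, 12, -8], ![-4, 6, -12, 2, 10, -10, 8],
    ![-16, 14, 18, -18, 4, -2, 0]], ?_, ?_, ?_, ?_⟩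
  · decide
  · simp only [Fintype.card_fin]; decide
  · decide
  · decide

/-! ### Odd magic rectangles -/

theorem sum_self_map (s : Finset ℤ) (σ F : ℤ → ℤ) (h1 : ∀ x ∈ s, σ x ∈ s)
    (h2 : ∀ x ∈ s, ∀ y ∈ s, σ x = σ y → x = y) : ∑ x ∈ s, F (σ x) = ∑ x ∈ s, F x := by
  have hinj : Set.InjOn σ s := fun x hx y hy h => h2 x hx y hy h
  have him : s.image σ = s := by
    apply Finset.eq_of_subset_of_card_le
    · intro y hy
      obtain ⟨x, hx, rfl⟩ := Finset.mem_image.1 hy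
      exact h1 x hx
    · rw [Finset.card_image_of_injOn hinj]
  conv_rhs => rw [← him]
  rw [Finset.sum_image hinj]

theorem sum_odd_fun (k : ℤ) (F : ℤ → ℤ) (hF : ∀ x, F (-x) = -F x) :
    ∑ x ∈ Icc (-k) k, F x = 0 := by
  have := sum_self_map (Icc (-k) k) (fun x => -x) F
    (by intro x hx; simp only [Finset.mem_Icc] at *; omega) (by intro x _ y _ h; omega)
  simp only [hF, Finset.sum_neg_distrib] at this
  omega

def bF (h r : ℤ) : ℤ := if r ≤ 0 then r + h else r - h - 1

def AF (h k : ℤ) (X : Finset ℤ) (r t : ℤ) : ℤ :=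
  if t = 0 then -(r + bF h r) else if t = -k then bF h r else if t ∈ X then r else -r

def BF (h k : ℤ) (τ : ℤ → ℤ) (i t : ℤ) : ℤ :=
  if i = 0 then t else if i = h then bF k t else if i = -h then -t - bF k t
  else if 0 < i then τ t else -τ t

theorem AF_mem {h k : ℤ} (hh : 1 ≤ h) (X : Finset ℤ) {r : ℤ} (t : ℤ) (hr : r ∈ Icc (-h) h) :
    AF h k X r t ∈ Icc (-h) h := by
  simp only [Finset.mem_Icc] at *
  unfold AF bF
  split_ifs <;> omega

theorem AF_inj {h k : ℤ} (X : Finset ℤ) {r r' : ℤ} (t : ℤ)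
    (hr : r ∈ Icc (-h) h) (hr' : r' ∈ Icc (-h) h) (he : AF h k X r t = AF h k X r' t) :
    r = r' := by
  simp only [Finset.mem_Icc] at *
  unfold AF bF at he
  split_ifs at he <;> omega

theorem BF_mem {h k : ℤ} {τ : ℤ → ℤ}
    (hτ : ∀ t ∈ Icc (-k) k, τ t ∈ Icc (-k) k) (i : ℤ) {t : ℤ} (ht : t ∈ Icc (-k) k) :
    BF h k τ i t ∈ Icc (-k) k := by
  have := hτ t ht
  simp only [Finset.mem_Icc] at *
  unfold BF bF
  split_ifs <;> omega

theorem BF_inj {h k : ℤ} {τ : ℤ → ℤ}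
    (hτ : ∀ t ∈ Icc (-k) k, ∀ t' ∈ Icc (-k) k, τ t = τ t' → t = t') (i : ℤ) {t t' : ℤ}
    (ht : t ∈ Icc (-k) k) (ht' : t' ∈ Icc (-k) k) (he : BF h k τ i t = BF h k τ i t') :
    t = t' := by
  have := hτ t ht t' ht'
  simp only [Finset.mem_Icc] at *
  unfold BF bF at he
  split_ifs at he <;> first | omega | (apply this; omega)

theorem BF_col {h k : ℤ} (hh : 1 ≤ h) (τ : ℤ → ℤ) (t : ℤ) :
    ∑ i ∈ Icc (-h) h, BF h k τ i t = 0 := by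
  have h1 := sum_odd_fun h (fun i => BF h k τ i t - (if i = 0 then t else 0)
    - (if i = h then -t else 0)) (by
      intro x
      unfold BF
      split_ifs <;> omega)
  simp only [Finset.sum_sub_distrib] at h1
  rw [Finset.sum_ite_eq' (Icc (-h) h) 0, Finset.sum_ite_eq' (Icc (-h) h) h] at h1
  rw [if_pos (by simp; omega), if_pos (by simp; omega)] at h1
  omega

theorem BF_sum (h k : ℤ) (τ : ℤ → ℤ) (i : ℤ) (S : Finset ℤ) :
    ∑ t ∈ S, BF h k τ i t = if i = 0 then ∑ t ∈ S, t else if i = h then ∑ t ∈ S, bF k t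
      else if i = -h then -∑ t ∈ S, t - ∑ t ∈ S, bF k t
      else if 0 < i then ∑ t ∈ S, τ t else -∑ t ∈ S, τ t := by
  unfold BF
  split_ifs <;> simp only [Finset.sum_sub_distrib, Finset.sum_neg_distrib,
    Finset.sum_neg_distrib (fun x : ℤ => x)]

theorem row_key {h k : ℤ} (hh : 1 ≤ h) (hk : 1 ≤ k) (τ : ℤ → ℤ) (hτ0 : τ 0 = 0)
    (hτk : τ (-k) = -k) {r u1 u2 u3 u4 u5 : ℤ} (hr1 : -h ≤ r) (hr2 : r ≤ h)
    (e1 : u1 + u2 = k) (e2 : u5 = k) (e3 : k - u1 - u3 + u4 = 0) :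
    BF h k τ (-(r + bF h r)) 0 + BF h k τ (bF h r) (-k) +
      (if -r = 0 then u1 else if -r = h then u3 else if -r = -h then -u1 - u3
        else if 0 < -r then u5 else -u5) +
      (if r = 0 then u2 else if r = h then u4 else if r = -h then -u2 - u4
        else if 0 < r then 0 else -0) = 0 := by
  have b0 : bF k 0 = k := by simp [bF]
  have bk : bF k (-k) = 0 := by unfold bF; rw [if_pos (by omega)]; omega
  have B0 : ∀ i, BF h k τ i 0 = if i = h then k else if i = -h then -k else 0 := by
    intro i
    unfold BF
    rw [b0, hτ0]
    split_ifs <;> omega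
  have Bk : ∀ i, BF h k τ i (-k) = if i = 0 then -k else if i = h then 0 else if i = -h then k
      else if 0 < i then -k else k := by
    intro i
    unfold BF
    rw [bk, hτk]
    split_ifs <;> omega
  rw [B0, Bk]
  clear B0 Bk b0 bk hτ0 hτk
  have hb : bF h r = if r ≤ 0 then r + h else r - h - 1 := rfl
  generalize bF h r = b at *
  rcases lt_trichotomy r 0 with h0 | h0 | h0
  · rw [if_pos (by omega)] at hb
    by_cases h1 : r = -h
    · rw [if_pos (by omega), if_pos (by omega), if_neg (by omega), if_pos (by omega),
        if_neg (by omega), if_neg (by omega), if_pos (by omega)]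
      omega
    · rw [if_neg (by omega), if_neg (by omega), if_neg (by omega), if_neg (by omega),
        if_neg (by omega), if_pos (by omega), if_neg (by omega), if_neg (by omega),
        if_neg (by omega), if_pos (by omega), if_neg (by omega), if_neg (by omega),
        if_neg (by omega), if_neg (by omega)]
      omega
  · rw [if_pos (by omega)] at hb
    rw [if_neg (by omega), if_pos (by omega), if_neg (by omega), if_pos (by omega),
      if_pos (by omega), if_pos (by omega)]
    omega
  · rw [if_neg (by omega)] at hb
    have e4 : (if b = 0 then -k else if b = h then 0 else if b = -h then k
      else if 0 < b then -k else k) = k := by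
      rw [if_neg (by omega), if_neg (by omega)]
      split_ifs <;> omega
    rw [e4]
    by_cases h1 : r = h
    · rw [if_neg (by omega), if_neg (by omega), if_neg (by omega), if_neg (by omega),
        if_pos (by omega), if_neg (by omega), if_pos (by omega)]
      omega
    · rw [if_neg (by omega), if_neg (by omega), if_neg (by omega), if_neg (by omega),
        if_neg (by omega), if_neg (by omega), if_neg (by omega), if_neg (by omega),
        if_neg (by omega), if_pos (by omega)]
      omega

theorem AF_row {h k : ℤ} (hh : 1 ≤ h) (hk : 1 ≤ k) (X : Finset ℤ) (τ : ℤ → ℤ)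
    (hX : X ⊆ Icc (-k) k) (hX0 : 0 ∉ X) (hXk : -k ∉ X) (hXc : (X.card : ℤ) = k)
    (hτ : ∀ t ∈ Icc (-k) k, τ t ∈ Icc (-k) k)
    (hτi : ∀ t ∈ Icc (-k) k, ∀ t' ∈ Icc (-k) k, τ t = τ t' → t = t')
    (hτ0 : τ 0 = 0) (hτk : τ (-k) = -k) (hs : ∑ t ∈ X, τ t = 0)
    (hs2 : ∑ t ∈ X, (2 * bF k t + t) = -k) (r : ℤ) (hr : r ∈ Icc (-h) h) :
    ∑ t ∈ Icc (-k) k, ((2 * k + 1) * AF h k X r t + BF h k τ (AF h k X r t) t) = 0 := by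
  set Y : Finset ℤ := (((Icc (-k) k).erase 0).erase (-k)) \ X with hY
  have hXsub : X ⊆ ((Icc (-k) k).erase 0).erase (-k) := by
    intro x hx
    simp only [Finset.mem_erase]
    exact ⟨fun e => hXk (e ▸ hx), fun e => hX0 (e ▸ hx), hX hx⟩
  have split : ∀ F : ℤ → ℤ, ∑ t ∈ Icc (-k) k, F t = F 0 + (F (-k) +
      (∑ t ∈ Y, F t + ∑ t ∈ X, F t)) := by
    intro F
    rw [Finset.sum_sdiff hXsub, Finset.add_sum_erase, Finset.add_sum_erase]
    · simp; omega
    · simp; omega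
  have tot : ∑ t ∈ Icc (-k) k, t = 0 := sum_odd_fun k (fun t => t) (by simp)
  have totτ : ∑ t ∈ Icc (-k) k, τ t = 0 := by
    rw [← tot]; exact sum_self_map _ τ (fun t => t) hτ hτi
  have totb : ∑ t ∈ Icc (-k) k, bF k t = 0 := by
    rw [← tot]
    refine sum_self_map _ (bF k) (fun t => t) ?_ ?_
    · intro x hx
      simp only [Finset.mem_Icc] at *
      unfold bF
      split_ifs <;> omega
    · intro x hx y hy h
      simp only [Finset.mem_Icc] at *
      unfold bF at h
      split_ifs at h <;> omega
  have totc : (∑ t ∈ Icc (-k) k, (1 : ℤ)) = 2 * k + 1 := by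
    simp; omega
  rw [split] at tot totτ totb totc
  have b0 : bF k 0 = k := by simp [bF]
  have bk : bF k (-k) = 0 := by unfold bF; rw [if_pos (by omega)]; omega
  rw [b0, bk] at totb
  rw [hτ0, hτk, hs] at totτ
  simp only [Finset.sum_const, smul_eq_mul, mul_one, nsmul_eq_mul, hXc] at totc
  rw [Finset.sum_add_distrib, ← Finset.mul_sum] at hs2
  rw [split]
  have A0 : AF h k X r 0 = -(r + bF h r) := by simp [AF]
  have Ak : AF h k X r (-k) = bF h r := by
    unfold AF; rw [if_neg (by omega), if_pos rfl]
  have sX : ∑ t ∈ X, ((2 * k + 1) * AF h k X r t + BF h k τ (AF h k X r t) t)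
      = (2 * k + 1) * (k * r) + ∑ t ∈ X, BF h k τ r t := by
    have : ∀ t ∈ X, ((2 * k + 1) * AF h k X r t + BF h k τ (AF h k X r t) t) =
        (2 * k + 1) * r + BF h k τ r t := by
      intro t ht
      have : AF h k X r t = r := by
        unfold AF
        rw [if_neg (ne_of_mem_of_not_mem ht hX0), if_neg (ne_of_mem_of_not_mem ht hXk), if_pos ht]
      rw [this]
    rw [Finset.sum_congr rfl this, Finset.sum_add_distrib, Finset.sum_const, nsmul_eq_mul, hXc]
    ring
  have hYc : (Y.card : ℤ) = k - 1 := by omega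
  have sY : ∑ t ∈ Y, ((2 * k + 1) * AF h k X r t + BF h k τ (AF h k X r t) t)
      = (2 * k + 1) * (-(k - 1) * r) + ∑ t ∈ Y, BF h k τ (-r) t := by
    have : ∀ t ∈ Y, ((2 * k + 1) * AF h k X r t + BF h k τ (AF h k X r t) t) =
        (2 * k + 1) * (-r) + BF h k τ (-r) t := by
      intro t ht
      have : AF h k X r t = -r := by
        simp only [hY, Finset.mem_sdiff, Finset.mem_erase] at ht
        unfold AF
        rw [if_neg ht.1.2.1, if_neg ht.1.1, if_neg ht.2]
      rw [this]
    rw [Finset.sum_congr rfl this, Finset.sum_add_distrib, Finset.sum_const, nsmul_eq_mul, hYc]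
    ring
  rw [sX, sY, A0, Ak]
  have key : BF h k τ (-(r + bF h r)) 0 + BF h k τ (bF h r) (-k) +
      ∑ t ∈ Y, BF h k τ (-r) t + ∑ t ∈ X, BF h k τ r t = 0 := by
    rw [BF_sum, BF_sum, hs]
    simp only [Finset.mem_Icc] at hr
    exact row_key hh hk τ hτ0 hτk hr.1 hr.2 (by omega) (by omega) (by omega)
  linear_combination key

theorem magic_odd_core {h k : ℤ} (hh : 1 ≤ h) (hk : 1 ≤ k) (X : Finset ℤ) (τ : ℤ → ℤ)
    (hX : X ⊆ Icc (-k) k) (hX0 : 0 ∉ X) (hXk : -k ∉ X) (hXc : (X.card : ℤ) = k)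
    (hτ : ∀ t ∈ Icc (-k) k, τ t ∈ Icc (-k) k)
    (hτi : ∀ t ∈ Icc (-k) k, ∀ t' ∈ Icc (-k) k, τ t = τ t' → t = t')
    (hτ0 : τ 0 = 0) (hτk : τ (-k) = -k) (hs : ∑ t ∈ X, τ t = 0)
    (hs2 : ∑ t ∈ X, (2 * bF k t + t) = -k) :
    Magic (Icc (-h) h : Finset ℤ) (Icc (-k) k : Finset ℤ) := by
  have ch : (Fintype.card (Icc (-h) h : Finset ℤ) : ℤ) = 2 * h + 1 := by simp; omega
  have ck : (Fintype.card (Icc (-k) k : Finset ℤ) : ℤ) = 2 * k + 1 := by simp; omega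
  refine ⟨fun r t => 2 * ((2 * k + 1) * AF h k X r t + BF h k τ (AF h k X r t) t), ?_, ?_, ?_, ?_⟩
  · rintro ⟨r, hr⟩ ⟨t, ht⟩ ⟨r', hr'⟩ ⟨t', ht'⟩ he
    simp only at he
    have b1 := Finset.mem_Icc.1 (BF_mem (h := h) hτ (AF h k X r t) ht)
    have b2 := Finset.mem_Icc.1 (BF_mem (h := h) hτ (AF h k X r' t') ht')
    have hA : AF h k X r t = AF h k X r' t' := by
      generalize AF h k X r t = A at *
      generalize AF h k X r' t' = A' at *
      generalize BF h k τ A t = B at *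
      generalize BF h k τ A' t' = B' at *
      by_contra hne
      rcases lt_or_gt_of_ne hne with hlt | hlt <;> nlinarith
    rw [hA] at he
    have htt : t = t' := BF_inj (h := h) hτi (AF h k X r' t') ht ht' (by linarith)
    subst htt
    have hrr := AF_inj X t hr hr' hA
    subst hrr
    exact ⟨rfl, rfl⟩
  · rintro ⟨r, hr⟩ ⟨t, ht⟩
    rw [ch, ck]
    have b1 := Finset.mem_Icc.1 (BF_mem (h := h) hτ (AF h k X r t) ht)
    have b2 := Finset.mem_Icc.1 (AF_mem (k := k) hh X t hr)
    simp only
    generalize BF h k τ (AF h k X r t) t = B at *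
    generalize AF h k X r t = A at *
    constructor
    · rw [abs_lt]
      constructor <;> nlinarith
    · have : 2 * ((2 * k + 1) * A + B) + (2 * h + 1) * (2 * k + 1) =
        1 + 2 * ((2 * k + 1) * A + B + 2 * h * k + h + k) := by ring
      rw [this]
      omega
  · rintro ⟨r, hr⟩
    rw [Finset.sum_coe_sort (Icc (-k) k)
      (fun t => 2 * ((2 * k + 1) * AF h k X r t + BF h k τ (AF h k X r t) t)), ← Finset.mul_sum,
      AF_row hh hk X τ hX hX0 hXk hXc hτ hτi hτ0 hτk hs hs2 r hr, mul_zero]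
  · rintro ⟨t, ht⟩
    rw [Finset.sum_coe_sort (Icc (-h) h)
      (fun r => 2 * ((2 * k + 1) * AF h k X r t + BF h k τ (AF h k X r t) t)), ← Finset.mul_sum,
      sum_self_map (Icc (-h) h) (fun r => AF h k X r t) (fun i => (2 * k + 1) * i + BF h k τ i t)
        (fun r hr => AF_mem hh X t hr) (fun r hr r' hr' he => AF_inj X t hr hr' he),
      Finset.sum_add_distrib, BF_col hh, ← Finset.mul_sum,
      sum_odd_fun h (fun i => i) (by simp)]
    simp

/-- The symmetric set `{±1, …, ±j}`. -/
noncomputable def PS (j : ℤ) : Finset ℤ := (Icc (-j) j).erase 0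

theorem PS_sum (j : ℤ) (hj : 0 ≤ j) (F : ℤ → ℤ) :
    ∑ t ∈ PS j, F t = ∑ t ∈ Icc 1 j, (F t + F (-t)) := by
  have h1 : PS j = Icc 1 j ∪ (Icc 1 j).image (fun x => -x) := by
    ext x
    simp only [PS, Finset.mem_erase, Finset.mem_Icc, Finset.mem_union, Finset.mem_image]
    constructor
    · intro hx
      by_cases h : 0 < x
      · left; omega
      · right; exact ⟨-x, by omega, by omega⟩
    · rintro (hx | ⟨y, hy, rfl⟩) <;> omega
  rw [h1, Finset.sum_union, Finset.sum_image, Finset.sum_add_distrib]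
  · intro x _ y _ h; simpa using h
  · rw [Finset.disjoint_left]
    intro x hx hy
    simp only [Finset.mem_Icc, Finset.mem_image] at *
    obtain ⟨y, hy, rfl⟩ := hy
    omega

theorem PS_sum_bF (j k : ℤ) (hj : 0 ≤ j) :
    ∑ t ∈ PS j, (2 * bF k t + t) = -2 * j := by
  rw [PS_sum j hj]
  have : ∀ t ∈ Icc (1 : ℤ) j, (2 * bF k t + t) + (2 * bF k (-t) + -t) = -2 := by
    intro t ht
    rw [Finset.mem_Icc] at ht
    unfold bF
    rw [if_neg (by omega), if_pos (by omega)]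
    omega
  rw [Finset.sum_congr rfl this]
  simp
  omega

theorem PS_card (j : ℤ) (hj : 0 ≤ j) : ((PS j).card : ℤ) = 2 * j := by
  unfold PS
  rw [Finset.card_erase_of_mem (by simp; omega)]
  simp
  omega

theorem magic_odd_even {h j : ℤ} (hh : 1 ≤ h) (hj : 1 ≤ j) :
    Magic (Icc (-h) h : Finset ℤ) (Icc (-(2 * j)) (2 * j) : Finset ℤ) := by
  refine magic_odd_core hh (by omega) (PS j) (fun t => t) ?_ ?_ ?_ ?_ ?_ ?_ ?_ ?_ ?_ ?_
  · intro x hx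
    simp only [PS, Finset.mem_erase, Finset.mem_Icc] at *
    omega
  · simp [PS]
  · simp only [PS, Finset.mem_erase, Finset.mem_Icc]
    omega
  · rw [PS_card j (by omega)]
  · exact fun t ht => ht
  · exact fun t _ t' _ h => h
  · rfl
  · rfl
  · rw [PS_sum j (by omega)]; simp
  · rw [PS_sum_bF j _ (by omega)]; ring

def tauF (j t : ℤ) : ℤ :=
  if t = 2 * j + 1 then -j else if t = -j then 2 * j + 1 else if t = 1 then -(j + 1)
  else if t = -(j + 1) then 1 else t

theorem magic_odd_odd {h j : ℤ} (hh : 1 ≤ h) (hj : 2 ≤ j) :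
    Magic (Icc (-h) h : Finset ℤ) (Icc (-(2 * j + 1)) (2 * j + 1) : Finset ℤ) := by
  have e1 : (2 * j + 1 : ℤ) ∉ PS (j - 1) := by
    simp only [PS, Finset.mem_erase, Finset.mem_Icc]; omega
  have e2 : (j + 2 : ℤ) ∉ insert (2 * j + 1) (PS (j - 1)) := by
    simp only [PS, Finset.mem_insert, Finset.mem_erase, Finset.mem_Icc]; omega
  have e3 : (j : ℤ) ∉ insert (j + 2) (insert (2 * j + 1) (PS (j - 1))) := by
    simp only [PS, Finset.mem_insert, Finset.mem_erase, Finset.mem_Icc]; omega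
  refine magic_odd_core hh (by omega) (insert j (insert (j + 2) (insert (2 * j + 1) (PS (j - 1)))))
    (tauF j) ?_ ?_ ?_ ?_ ?_ ?_ ?_ ?_ ?_ ?_
  · intro x hx
    simp only [PS, Finset.mem_insert, Finset.mem_erase, Finset.mem_Icc] at *
    omega
  · simp only [PS, Finset.mem_insert, Finset.mem_erase, Finset.mem_Icc]
    omega
  · simp only [PS, Finset.mem_insert, Finset.mem_erase, Finset.mem_Icc]
    omega
  · rw [Finset.card_insert_of_notMem e3, Finset.card_insert_of_notMem e2,
      Finset.card_insert_of_notMem e1]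
    have := PS_card (j - 1) (by omega)
    push_cast
    omega
  · intro t ht
    simp only [Finset.mem_Icc] at *
    unfold tauF
    split_ifs <;> omega
  · intro t ht t' ht' he
    simp only [Finset.mem_Icc] at *
    unfold tauF at he
    split_ifs at he <;> omega
  · unfold tauF; split_ifs <;> omega
  · unfold tauF; split_ifs <;> omega
  · rw [Finset.sum_insert e3, Finset.sum_insert e2, Finset.sum_insert e1]
    have : ∀ t ∈ PS (j - 1), tauF j t = t + if t = 1 then -(j + 2) else 0 := by
      intro t ht
      simp only [PS, Finset.mem_erase, Finset.mem_Icc] at ht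
      unfold tauF
      split_ifs <;> omega
    rw [Finset.sum_congr rfl this, Finset.sum_add_distrib, Finset.sum_ite_eq' (PS (j - 1)) 1,
      if_pos (by simp only [PS, Finset.mem_erase, Finset.mem_Icc]; omega),
      PS_sum (j - 1) (by omega)]
    have t1 : tauF j j = j := by unfold tauF; split_ifs <;> omega
    have t2 : tauF j (j + 2) = j + 2 := by unfold tauF; split_ifs <;> omega
    have t3 : tauF j (2 * j + 1) = -j := by unfold tauF; split_ifs <;> omega
    rw [t1, t2, t3]
    simp
    ring
  · rw [Finset.sum_insert e3, Finset.sum_insert e2, Finset.sum_insert e1,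
      PS_sum_bF _ _ (by omega)]
    unfold bF
    split_ifs <;> omega

theorem magic_odd_nat {a b : ℕ} (ha : 1 ≤ a) (hb : 2 ≤ b) (hb3 : b ≠ 3) :
    Magic (Fin (2 * a + 1)) (Fin (2 * b + 1)) := by
  rcases Nat.even_or_odd' b with ⟨j, rfl | rfl⟩
  · have := magic_odd_even (h := a) (j := j) (by omega) (by omega)
    exact this.congr (by simp; omega) (by simp; omega)
  · have := magic_odd_odd (h := a) (j := j) (by omega) (by omega)
    exact this.congr (by simp; omega) (by simp; omega)

theorem magic_odd {a b : ℕ} (ha : 1 ≤ a) (hb : 1 ≤ b) (hab : a ≠ b) :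
    Magic (Fin (2 * a + 1)) (Fin (2 * b + 1)) := by
  by_cases h1 : 2 ≤ b ∧ b ≠ 3
  · exact magic_odd_nat ha h1.1 h1.2
  by_cases h2 : 2 ≤ a ∧ a ≠ 3
  · exact (magic_odd_nat hb h2.1 h2.2).symm
  have : (a = 1 ∧ b = 3) ∨ (a = 3 ∧ b = 1) := by omega
  rcases this with ⟨rfl, rfl⟩ | ⟨rfl, rfl⟩
  · exact magic_three_seven
  · exact magic_three_seven.symm

theorem magic_parity {m n : ℕ} (hmn : m ≠ n) (hm : 2 ≤ m) (hn : 2 ≤ n) (hpar : m % 2 = n % 2) :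
    Magic (Fin m) (Fin n) := by
  rcases Nat.even_or_odd' m with ⟨a, rfl | rfl⟩
  · exact magic_even (by simp) (Nat.even_iff.2 (by omega)) (by omega)
  · obtain ⟨b, rfl⟩ : ∃ b, n = 2 * b + 1 := ⟨n / 2, by omega⟩
    exact magic_odd (by omega) (by omega) (by omega)

/-- A magic rectangle in the usual form, with entries `1, …, N`. -/
theorem Magic.nat {α β : Type*} [Fintype α] [Fintype β] (h : Magic α β) :
    ∃ M : α → β → ℕ, (∀ a b a' b', M a b = M a' b' → a = a' ∧ b = b') ∧
      (∀ a b, 1 ≤ M a b ∧ M a b ≤ Fintype.card α * Fintype.card β) ∧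
      (∀ v, 1 ≤ v → v ≤ Fintype.card α * Fintype.card β → ∃ a b, M a b = v) ∧
      (∀ a, 2 * ∑ b, M a b = Fintype.card β * (Fintype.card α * Fintype.card β + 1)) ∧
      (∀ b, 2 * ∑ a, M a b = Fintype.card α * (Fintype.card α * Fintype.card β + 1)) := by
  obtain ⟨w, h1, h2, h3, h4⟩ := h
  have hM : ∀ a b, ∃ x : ℕ, 2 * (x : ℤ) = w a b + Fintype.card α * Fintype.card β + 1 := by
    intro a b
    have h5 := (h2 a b).2
    have h6 := abs_lt.1 (h2 a b).1
    exact ⟨((w a b + Fintype.card α * Fintype.card β + 1) / 2).toNat, by omega⟩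
  choose M hM using hM
  have inj : ∀ a b a' b', M a b = M a' b' → a = a' ∧ b = b' := by
    intro a b a' b' he
    apply h1
    have e1 := hM a b
    have e2 := hM a' b'
    rw [he] at e1
    omega
  have rng : ∀ a b, 1 ≤ M a b ∧ M a b ≤ Fintype.card α * Fintype.card β := by
    intro a b
    have h6 := abs_lt.1 (h2 a b).1
    have h7 := hM a b
    zify
    omega
  refine ⟨M, inj, rng, ?_, ?_, ?_⟩
  · intro v hv1 hv2
    have him : (Finset.univ : Finset (α × β)).image (fun x => M x.1 x.2)
        = Icc 1 (Fintype.card α * Fintype.card β) := by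
      apply Finset.eq_of_subset_of_card_le
      · intro y hy
        obtain ⟨x, _, rfl⟩ := Finset.mem_image.1 hy
        exact Finset.mem_Icc.2 (rng _ _)
      · rw [Finset.card_image_of_injective]
        · simp [Fintype.card_prod]
        · rintro ⟨a, b⟩ ⟨a', b'⟩ he
          have := inj _ _ _ _ he
          exact Prod.ext this.1 this.2
    have : v ∈ (Finset.univ : Finset (α × β)).image (fun x => M x.1 x.2) := by
      rw [him]; exact Finset.mem_Icc.2 ⟨hv1, hv2⟩
    obtain ⟨x, _, hx⟩ := Finset.mem_image.1 this
    exact ⟨x.1, x.2, hx⟩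
  · intro a
    zify
    rw [Finset.mul_sum, Finset.sum_congr rfl (fun b _ => hM a b), Finset.sum_add_distrib,
      Finset.sum_add_distrib, h3]
    simp
    ring
  · intro b
    zify
    rw [Finset.mul_sum, Finset.sum_congr rfl (fun a _ => hM a b), Finset.sum_add_distrib,
      Finset.sum_add_distrib, h4]
    simp
    ring

/-! ### Labelling the join -/

theorem vertexWeight_eq {V : Type*} [Fintype V] (G : SimpleGraph V) (f : Sym2 V → ℕ) (x : V) :
    vertexWeight G f x = ∑ y, if G.Adj x y then f s(x, y) else 0 := by
  unfold vertexWeight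
  rw [← Finset.sum_filter]
  symm
  refine Finset.sum_bij (fun y _ => s(x, y)) ?_ ?_ ?_ ?_
  · intro y hy
    simpa using hy
  · intro y _ z _ h
    exact Sym2.congr_right.1 h
  · intro e he
    simp only [Finset.mem_filter, SimpleGraph.mem_edgeFinset] at he
    obtain ⟨he, y, rfl⟩ := he
    exact ⟨y, by simpa using he, rfl⟩
  · intro y _
    rfl

section JoinAdj

variable {α β : Type*} (G : SimpleGraph α) (H : SimpleGraph β)

theorem joinG_ll (a b : α) : (joinG G H).Adj (Sum.inl a) (Sum.inl b) ↔ G.Adj a b := by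
  simp only [joinG, SimpleGraph.fromRel_adj]
  constructor
  · rintro ⟨_, h⟩
    rcases h with (⟨x, y, h1, h2, h⟩ | ⟨x, y, h1, h2, h⟩ | ⟨x, y, h1, h2⟩) |
      (⟨x, y, h1, h2, h⟩ | ⟨x, y, h1, h2, h⟩ | ⟨x, y, h1, h2⟩) <;> simp_all
    exact h.symm
  · intro h
    exact ⟨by simpa using h.ne, Or.inl (Or.inl ⟨a, b, rfl, rfl, h⟩)⟩

theorem joinG_rr (a b : β) : (joinG G H).Adj (Sum.inr a) (Sum.inr b) ↔ H.Adj a b := by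
  simp only [joinG, SimpleGraph.fromRel_adj]
  constructor
  · rintro ⟨_, h⟩
    rcases h with (⟨x, y, h1, h2, h⟩ | ⟨x, y, h1, h2, h⟩ | ⟨x, y, h1, h2⟩) |
      (⟨x, y, h1, h2, h⟩ | ⟨x, y, h1, h2, h⟩ | ⟨x, y, h1, h2⟩) <;> simp_all
    exact h.symm
  · intro h
    exact ⟨by simpa using h.ne, Or.inl (Or.inr (Or.inl ⟨a, b, rfl, rfl, h⟩))⟩

theorem joinG_lr (a : α) (b : β) : (joinG G H).Adj (Sum.inl a) (Sum.inr b) := by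
  simp [joinG, SimpleGraph.fromRel_adj]

theorem joinG_rl (a : α) (b : β) : (joinG G H).Adj (Sum.inr b) (Sum.inl a) :=
  (joinG_lr G H a b).symm

end JoinAdj

/-- The symmetric function underlying the labelling of the join. -/
def labFun {V A B : Type*} (f : Sym2 V → ℕ) (e c : ℕ) (M : V → A ⊕ B → ℕ) (L : A → B → ℕ) :
    V ⊕ (A ⊕ B) → V ⊕ (A ⊕ B) → ℕ
  | Sum.inl u, Sum.inl v => f s(u, v)
  | Sum.inl u, Sum.inr z => e + M u z
  | Sum.inr z, Sum.inl u => e + M u z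
  | Sum.inr (Sum.inl i), Sum.inr (Sum.inr j) => e + c + L i j
  | Sum.inr (Sum.inr j), Sum.inr (Sum.inl i) => e + c + L i j
  | Sum.inr (Sum.inl _), Sum.inr (Sum.inl _) => 0
  | Sum.inr (Sum.inr _), Sum.inr (Sum.inr _) => 0

theorem labFun_symm {V A B : Type*} (f : Sym2 V → ℕ) (e c : ℕ) (M : V → A ⊕ B → ℕ)
    (L : A → B → ℕ) (x y : V ⊕ (A ⊕ B)) : labFun f e c M L x y = labFun f e c M L y x := by
  rcases x with u | i | i <;> rcases y with v | j | j <;> simp [labFun, Sym2.eq_swap]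

def lab {V A B : Type*} (f : Sym2 V → ℕ) (e c : ℕ) (M : V → A ⊕ B → ℕ) (L : A → B → ℕ) :
    Sym2 (V ⊕ (A ⊕ B)) → ℕ :=
  Sym2.lift ⟨labFun f e c M L, labFun_symm f e c M L⟩

section Weights

variable {V A B : Type*} [Fintype V] [Fintype A] [Fintype B] (G : SimpleGraph V)
  (f : Sym2 V → ℕ) (e c : ℕ) (M : V → A ⊕ B → ℕ) (L : A → B → ℕ)

theorem weight_l (u : V) :
    vertexWeight (joinG G (completeBipartiteGraph A B)) (lab f e c M L) (Sum.inl u) =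
      vertexWeight G f u + ((Fintype.card A + Fintype.card B) * e + ∑ z, M u z) := by
  rw [vertexWeight_eq, vertexWeight_eq, Fintype.sum_sum_type]
  simp only [joinG_ll, joinG_lr, if_true, lab, Sym2.lift_mk, labFun, Finset.sum_add_distrib]
  simp

theorem weight_rl (i : A) :
    vertexWeight (joinG G (completeBipartiteGraph A B)) (lab f e c M L) (Sum.inr (Sum.inl i)) =
      (Fintype.card V * e + ∑ u, M u (Sum.inl i)) + (Fintype.card B * (e + c) + ∑ j, L i j) := by
  rw [vertexWeight_eq, Fintype.sum_sum_type, Fintype.sum_sum_type]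
  simp only [joinG_rr, joinG_rl, if_true, lab, Sym2.lift_mk, labFun, Finset.sum_add_distrib]
  simp [Finset.sum_add_distrib]

theorem weight_rr (j : B) :
    vertexWeight (joinG G (completeBipartiteGraph A B)) (lab f e c M L) (Sum.inr (Sum.inr j)) =
      (Fintype.card V * e + ∑ u, M u (Sum.inr j)) + (Fintype.card A * (e + c) + ∑ i, L i j) := by
  rw [vertexWeight_eq, Fintype.sum_sum_type, Fintype.sum_sum_type]
  simp only [joinG_rr, joinG_rl, if_true, lab, Sym2.lift_mk, labFun, Finset.sum_add_distrib]
  simp [Finset.sum_add_distrib]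

theorem join_edge_cases {s : Sym2 (V ⊕ (A ⊕ B))}
    (hs : s ∈ (joinG G (completeBipartiteGraph A B)).edgeSet) :
    (∃ u v, G.Adj u v ∧ s = s(Sum.inl u, Sum.inl v)) ∨
    (∃ u z, s = s(Sum.inl u, Sum.inr z)) ∨
    (∃ i j, s = s(Sum.inr (Sum.inl i), Sum.inr (Sum.inr j))) := by
  induction s using Sym2.ind with
  | _ x y =>
    rw [SimpleGraph.mem_edgeSet] at hs
    rcases x with u | x <;> rcases y with v | y
    · exact Or.inl ⟨u, v, (joinG_ll _ _ _ _).1 hs, rfl⟩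
    · exact Or.inr (Or.inl ⟨u, y, rfl⟩)
    · exact Or.inr (Or.inl ⟨v, x, Sym2.eq_swap⟩)
    · rw [joinG_rr] at hs
      right; right
      rcases x with i | i <;> rcases y with j | j
      · simp at hs
      · exact ⟨i, j, rfl⟩
      · exact ⟨j, i, Sym2.eq_swap⟩
      · simp at hs

theorem lab_bijOn {N : ℕ} (hf : Set.BijOn f G.edgeSet (Set.Icc 1 e))
    (M1 : ∀ a b a' b', M a b = M a' b' → a = a' ∧ b = b')
    (M2 : ∀ a b, 1 ≤ M a b ∧ M a b ≤ c)
    (M3 : ∀ v, 1 ≤ v → v ≤ c → ∃ a b, M a b = v)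
    (L1 : ∀ a b a' b', L a b = L a' b' → a = a' ∧ b = b')
    (L2 : ∀ a b, 1 ≤ L a b ∧ L a b ≤ N)
    (L3 : ∀ v, 1 ≤ v → v ≤ N → ∃ a b, L a b = v) :
    Set.BijOn (lab f e c M L) (joinG G (completeBipartiteGraph A B)).edgeSet
      (Set.Icc 1 (e + c + N)) := by
  have l1 : ∀ u v, lab f e c M L s(Sum.inl u, Sum.inl v) = f s(u, v) := fun _ _ => rfl
  have l2 : ∀ u z, lab f e c M L s(Sum.inl u, Sum.inr z) = e + M u z := fun _ _ => rfl
  have l3 : ∀ i j, lab f e c M L s(Sum.inr (Sum.inl i), Sum.inr (Sum.inr j)) = e + c + L i j :=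
    fun _ _ => rfl
  have hfm : ∀ u v, G.Adj u v → 1 ≤ f s(u, v) ∧ f s(u, v) ≤ e := by
    intro u v h
    exact hf.mapsTo (G.mem_edgeSet.2 h)
  refine ⟨?_, ?_, ?_⟩
  · intro s hs
    rcases join_edge_cases G hs with ⟨u, v, h, rfl⟩ | ⟨u, z, rfl⟩ | ⟨i, j, rfl⟩
    · have := hfm u v h
      rw [l1, Set.mem_Icc]; omega
    · have := M2 u z
      rw [l2, Set.mem_Icc]; omega
    · have := L2 i j
      rw [l3, Set.mem_Icc]; omega
  · intro s hs s' hs' he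
    rcases join_edge_cases G hs with ⟨u, v, h, rfl⟩ | ⟨u, z, rfl⟩ | ⟨i, j, rfl⟩ <;>
    rcases join_edge_cases G hs' with ⟨u', v', h', rfl⟩ | ⟨u', z', rfl⟩ | ⟨i', j', rfl⟩ <;>
    simp only [l1, l2, l3] at he
    · have := hf.injOn (G.mem_edgeSet.2 h) (G.mem_edgeSet.2 h') he
      rw [Sym2.eq_iff] at this ⊢
      simpa using this
    · have := hfm u v h; have := M2 u' z'; omega
    · have := hfm u v h; have := L2 i' j'; omega
    · have := hfm u' v' h'; have := M2 u z; omega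
    · obtain ⟨rfl, rfl⟩ := M1 u z u' z' (by omega)
      rfl
    · have := M2 u z; have := L2 i' j'; omega
    · have := hfm u' v' h'; have := L2 i j; omega
    · have := M2 u' z'; have := L2 i j; omega
    · obtain ⟨rfl, rfl⟩ := L1 i j i' j' (by omega)
      rfl
  · intro v hv
    rw [Set.mem_Icc] at hv
    by_cases h1 : v ≤ e
    · obtain ⟨s, hs, rfl⟩ := hf.surjOn (Set.mem_Icc.2 ⟨hv.1, h1⟩)
      induction s using Sym2.ind with
      | _ x y =>
        exact ⟨s(Sum.inl x, Sum.inl y),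
          (SimpleGraph.mem_edgeSet _).2 ((joinG_ll _ _ _ _).2 ((SimpleGraph.mem_edgeSet _).1 hs)),
          l1 x y⟩
    by_cases h2 : v ≤ e + c
    · obtain ⟨u, z, h⟩ := M3 (v - e) (by omega) (by omega)
      exact ⟨s(Sum.inl u, Sum.inr z), (SimpleGraph.mem_edgeSet _).2 (joinG_lr _ _ _ _),
        by rw [l2]; omega⟩
    · obtain ⟨i, j, h⟩ := L3 (v - e - c) (by omega) (by omega)
      exact ⟨s(Sum.inr (Sum.inl i), Sum.inr (Sum.inr j)),
        (SimpleGraph.mem_edgeSet _).2 ((joinG_rr _ _ _ _).2 (by simp)), by rw [l3]; omega⟩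

end Weights

theorem colorCount_lower {V : Type*} [Fintype V] (G : SimpleGraph V) (t m n : ℕ)
    (hchi : G.chromaticNumber = (t : ℕ∞)) (hm : 2 ≤ m) (hn : 2 ≤ n)
    (g : Sym2 (V ⊕ (Fin m ⊕ Fin n)) → ℕ)
    (hg : IsLocalAntimagic (joinG G (completeBipartiteGraph (Fin m) (Fin n))) g) :
    t + 2 ≤ colorCount (joinG G (completeBipartiteGraph (Fin m) (Fin n))) g := by
  set H := joinG G (completeBipartiteGraph (Fin m) (Fin n)) with hH
  set w := vertexWeight H g with hw
  set S : Finset ℕ := Finset.univ.image (fun u : V => w (Sum.inl u)) with hS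
  have hcol : t ≤ S.card := by
    have C : G.Coloring S := SimpleGraph.Coloring.mk
      (fun u => ⟨w (Sum.inl u), Finset.mem_image_of_mem _ (Finset.mem_univ u)⟩) (by
        intro u v h he
        exact hg.2 ((joinG_ll _ _ _ _).2 h) (by simpa using he))
    have := C.colorable.chromaticNumber_le
    rw [hchi] at this
    simpa using this
  let i : Fin m ⊕ Fin n := Sum.inl ⟨0, by omega⟩
  let j : Fin m ⊕ Fin n := Sum.inr ⟨0, by omega⟩
  have hi : ∀ z : Fin m ⊕ Fin n, w (Sum.inr z) ∉ S := by
    intro z hz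
    obtain ⟨u, _, hu⟩ := Finset.mem_image.1 hz
    exact hg.2 (joinG_lr _ _ u z) hu
  have hij : w (Sum.inr i) ≠ w (Sum.inr j) :=
    hg.2 ((joinG_rr _ _ _ _).2 (by simp [i, j]))
  have hc : (insert (w (Sum.inr i)) (insert (w (Sum.inr j)) S)).card = S.card + 2 := by
    rw [Finset.card_insert_of_notMem, Finset.card_insert_of_notMem (hi j)]
    rw [Finset.mem_insert]
    rintro (h | h)
    · exact hij h
    · exact hi i h
  have hsub : insert (w (Sum.inr i)) (insert (w (Sum.inr j)) S) ⊆ Finset.univ.image w := by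
    intro x hx
    simp only [Finset.mem_insert] at hx
    rcases hx with rfl | rfl | hx
    · exact Finset.mem_image_of_mem _ (Finset.mem_univ _)
    · exact Finset.mem_image_of_mem _ (Finset.mem_univ _)
    · obtain ⟨u, _, rfl⟩ := Finset.mem_image.1 hx
      exact Finset.mem_image_of_mem _ (Finset.mem_univ _)
  have := Finset.card_le_card hsub
  unfold colorCount
  rw [← hw]
  omega

/-- Theorem: Let `G` be a graph of even order `p` and size `e` with `χ(G) = χ_la(G) = t`,
witnessed by a local antimagic labeling `f` with `c(f) = t = χ(G)`. Let `m ≠ n`, `m, n ≥ 2`,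
`m ≡ n (mod 2)`, `(m,n) ≠ (2,2)`. If for each vertex `u`, `f⁺(u)` avoids the two stated values,
then `χ_la(G ∨ K_{m,n}) = χ_la(G) + 2`.  (The avoided-value conditions are stated multiplied
by 2 over `ℤ`, which is equivalent since the parity hypotheses make the relevant products even.) -/
theorem chiLA_join_completeBipartite {V : Type*} [Fintype V] (G : SimpleGraph V)
    (p e m n t : ℕ)
    (hp : Fintype.card V = p) (hpeven : Even p)
    (he : G.edgeSet.ncard = e)
    (hchi : G.chromaticNumber = (t : ℕ∞)) (hla : chiLA G = t)
    (f : Sym2 V → ℕ) (hf : IsLocalAntimagic G f) (hcf : colorCount G f = t)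
    (hmn : m ≠ n) (hm : 2 ≤ m) (hn : 2 ≤ n) (hpar : m % 2 = n % 2)
    (h22 : ¬(m = 2 ∧ n = 2))
    (hne : ∀ u : V,
      2 * (vertexWeight G f u : ℤ) ≠
        2 * ((p : ℤ) - m) * e + ((p : ℤ) - m - n) * ((p : ℤ) * (m + n) + 1)
          + 2 * n * p * (m + n) + n * ((m : ℤ) * n + 1) ∧
      2 * (vertexWeight G f u : ℤ) ≠
        2 * ((p : ℤ) - n) * e + ((p : ℤ) - m - n) * ((p : ℤ) * (m + n) + 1)
          + 2 * m * p * (m + n) + m * ((m : ℤ) * n + 1)) :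
    chiLA (joinG G (completeBipartiteGraph (Fin m) (Fin n))) = chiLA G + 2 := by
  have hMag1 : Magic V (Fin m ⊕ Fin n) :=
    (magic_even (a := p) (b := m + n) hpeven (Nat.even_iff.2 (by omega)) (by omega)).congr
      (by simp [hp]) (by simp)
  have hMag2 : Magic (Fin m) (Fin n) := magic_parity hmn hm hn hpar
  obtain ⟨M, M1, M2, M3, M4, M5⟩ := hMag1.nat
  obtain ⟨L, L1, L2, L3, L4, L5⟩ := hMag2.nat
  simp only [Fintype.card_sum, Fintype.card_fin, hp] at M2 M3 M4 M5 L2 L3 L4 L5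
  have hbij := lab_bijOn G f e (p * (m + n)) M L (N := m * n) (he ▸ hf.1) M1 M2 M3 L1 L2 L3
  set H := joinG G (completeBipartiteGraph (Fin m) (Fin n)) with hH
  set F := lab f e (p * (m + n)) M L with hF
  have hcard : H.edgeSet.ncard = e + p * (m + n) + m * n := by
    rw [← Set.ncard_image_of_injOn hbij.injOn, hbij.image_eq]
    rw [← Nat.card_coe_set_eq]
    simp
  have wl := weight_l G f e (p * (m + n)) M L
  have wa := weight_rl G f e (p * (m + n)) M L
  have wb := weight_rr G f e (p * (m + n)) M L
  simp only [← hH, ← hF, Fintype.card_fin, hp] at wl wa wb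
  have wl2 : ∀ u, 2 * vertexWeight H F (Sum.inl u) = 2 * vertexWeight G f u +
      (2 * ((m + n) * e) + (m + n) * (p * (m + n) + 1)) := by
    intro u
    rw [wl, ← M4 u]; ring
  have wa2 : ∀ i, 2 * vertexWeight H F (Sum.inr (Sum.inl i)) =
      2 * (p * e) + p * (p * (m + n) + 1) + (2 * (n * (e + p * (m + n))) + n * (m * n + 1)) := by
    intro i
    rw [wa, ← M5 (Sum.inl i), ← L4 i]; ring
  have wb2 : ∀ j, 2 * vertexWeight H F (Sum.inr (Sum.inr j)) =
      2 * (p * e) + p * (p * (m + n) + 1) + (2 * (m * (e + p * (m + n))) + m * (m * n + 1)) := by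
    intro j
    rw [wb, ← M5 (Sum.inr j), ← L5 j]; ring
  have dla : ∀ u i, vertexWeight H F (Sum.inl u) ≠ vertexWeight H F (Sum.inr (Sum.inl i)) := by
    intro u i h
    have h1 := wl2 u
    rw [h, wa2 i] at h1
    apply (hne u).1
    zify at h1
    linear_combination -h1
  have dlb : ∀ u j, vertexWeight H F (Sum.inl u) ≠ vertexWeight H F (Sum.inr (Sum.inr j)) := by
    intro u j h
    have h1 := wl2 u
    rw [h, wb2 j] at h1
    apply (hne u).2
    zify at h1
    linear_combination -h1
  have dab : ∀ i j, vertexWeight H F (Sum.inr (Sum.inl i)) ≠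
      vertexWeight H F (Sum.inr (Sum.inr j)) := by
    intro i j h
    have h1 := wa2 i
    rw [h, wb2 j] at h1
    have h2 : m * (2 * (e + p * (m + n)) + (m * n + 1)) =
        n * (2 * (e + p * (m + n)) + (m * n + 1)) := by linarith
    exact hmn (Nat.eq_of_mul_eq_mul_right (by omega) h2)
  have hLA : IsLocalAntimagic H F := by
    refine ⟨by rw [hcard]; exact hbij, ?_⟩
    intro x y hxy
    rcases x with u | i | i <;> rcases y with v | j | j
    · have h1 := hf.2 ((joinG_ll _ _ _ _).1 hxy)
      have h2 := wl2 u
      have h3 := wl2 v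
      omega
    · exact dla u j
    · exact dlb u j
    · exact (dla v i).symm
    · have := (joinG_rr _ _ _ _).1 hxy
      simp at this
    · exact dab i j
    · exact (dlb v i).symm
    · exact (dab j i).symm
    · have := (joinG_rr _ _ _ _).1 hxy
      simp at this
  have hupper : colorCount H F ≤ t + 2 := by
    set D := (2 * ((m + n) * e) + (m + n) * (p * (m + n) + 1)) / 2 with hD
    let i0 : Fin m := ⟨0, by omega⟩
    let j0 : Fin n := ⟨0, by omega⟩
    have hsub : Finset.univ.image (vertexWeight H F) ⊆
        insert (vertexWeight H F (Sum.inr (Sum.inl i0)))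
          (insert (vertexWeight H F (Sum.inr (Sum.inr j0)))
            ((Finset.univ.image (vertexWeight G f)).image (fun x => x + D))) := by
      intro x hx
      obtain ⟨y, _, rfl⟩ := Finset.mem_image.1 hx
      simp only [Finset.mem_insert]
      rcases y with u | i | j
      · right; right
        refine Finset.mem_image.2 ⟨_, Finset.mem_image_of_mem _ (Finset.mem_univ u), ?_⟩
        have := wl2 u
        omega
      · left
        have h1 := wa2 i
        have h2 := wa2 i0
        omega
      · right; left
        have h1 := wb2 j
        have h2 := wb2 j0
        omega
    have h1 := Finset.card_le_card hsub
    have h2 := Finset.card_insert_le (vertexWeight H F (Sum.inr (Sum.inl i0)))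
      (insert (vertexWeight H F (Sum.inr (Sum.inr j0)))
            ((Finset.univ.image (vertexWeight G f)).image (fun x => x + D)))
    have h3 := Finset.card_insert_le (vertexWeight H F (Sum.inr (Sum.inr j0)))
            ((Finset.univ.image (vertexWeight G f)).image (fun x => x + D))
    have h4 : ((Finset.univ.image (vertexWeight G f)).image (fun x => x + D)).card ≤
      (Finset.univ.image (vertexWeight G f)).card := Finset.card_image_le
    unfold colorCount at hcf ⊢
    omega
  have hlow := colorCount_lower G t m n hchi hm hn
  rw [hla]
  have hmem : t + 2 ∈ { n | ∃ g, IsLocalAntimagic H g ∧ colorCount H g = n } :=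
    ⟨F, hLA, le_antisymm hupper (hlow F hLA)⟩
  apply le_antisymm
  · exact Nat.sInf_le hmem
  · refine le_csInf ⟨_, hmem⟩ ?_
    rintro b ⟨g, hg, rfl⟩
    exact hlow g hg
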